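/- Let X be a separable Hilbert space, μ a centered Gaussian measure on X with covariance Q and Cameron–Martin space H = Q^{1/2}(X), s ∈ (0,1), and η^{(s)}_t the s-stable subordination densities. Define ν_t(B) = ∫₀^∞ N(0, σQ)(B) η^{(s)}_t(σ) dσ for Borel B ⊂ X and t > 0. Then for every h ∈ H and t > 0, ν_t is Fomin differentiable along h, and ‖β^{ν_t}_h‖_{L¹(X,ν_t)} ≤ C t^{-1/(2s)} ‖h‖_H, where C = √(2/π) ∫₀^∞ η^{(s)}(τ) τ^{-1/2} dτ. -/

import Mathlib

/-!
The content is a statement about mixtures: if `κ_ω` is Fomin differentiable along `v` with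
logarithmic derivative `b_ω`, then `ν = ∫ κ_ω dm(ω)` is Fomin differentiable, and its logarithmic
derivative `β` is the density with respect to `ν` of the signed measure
`Λ(A) = ∫ (∫_A b_ω dκ_ω) dm(ω)`. Testing against the sign of `β` gives
`‖β‖_{L¹(ν)} ≤ ∫ ‖b_ω‖_{L¹(κ_ω)} dm(ω)`. For the subordination density this average is computed by
the substitution `τ = t^{-1/s} σ`.

The delicate point is that `b_ω` is chosen separately for each `ω`, so `Λ` makes sense only once
`ω ↦ ∫_A b_ω dκ_ω` is known to be measurable (`aestronglyMeasurable_setIntegral`). For a test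
function `f`, `∫ b_ω f dκ_ω = - ∫ ∂_v f dκ_ω` is measurable in `ω`, since `κ` is a kernel. Smooth
functions of the squared norm approximate indicators of balls in a Hilbert space, so the open sets
whose indicators are bounded limits of test functions form a `π`-system generating the Borel
`σ`-algebra, and a Dynkin-class argument covers all Borel sets. The identity
`∫ β f dν = ∫ (∫ b_ω f dκ_ω) dm` then passes from indicators to bounded measurable `f`
(`integral_mixture_density_mul`).
-/

open MeasureTheory Set

/-- `β` is the Fomin (logarithmic) derivative of the probability measure `μ` along `v`. -/
def IsFominDeriv {X : Type*} [NormedAddCommGroup X] [NormedSpace ℝ X]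
    [MeasurableSpace X] (μ : Measure X) (v : X) (β : X → ℝ) : Prop :=
  Integrable β μ ∧
  ∀ f : X → ℝ, ContDiff ℝ 1 f → (∃ C, ∀ x, |f x| ≤ C) →
    (∃ C, ∀ x, ‖fderiv ℝ f x‖ ≤ C) →
    ∫ x, fderiv ℝ f x v ∂μ = - ∫ x, β x * f x ∂μ

open ProbabilityTheory Filter Topology

/-! ### Test functions and the Borel σ-algebra -/

/-- The admissible test functions for `IsFominDeriv`: `f` is `C¹`, and `f` and its Fréchet
derivative are bounded. -/
def IsC1b {X : Type*} [NormedAddCommGroup X] [NormedSpace ℝ X] (f : X → ℝ) : Prop :=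
  ContDiff ℝ 1 f ∧ (∃ C, ∀ x, |f x| ≤ C) ∧ ∃ C, ∀ x, ‖fderiv ℝ f x‖ ≤ C

/-- `A` is a *`C¹`-limit set*: its indicator is the pointwise limit of test functions that are
bounded by `1`. -/
def IsC1Limit {X : Type*} [NormedAddCommGroup X] [NormedSpace ℝ X] (A : Set X) : Prop :=
  ∃ F : ℕ → X → ℝ, (∀ n, IsC1b (F n)) ∧ (∀ n x, |F n x| ≤ 1) ∧
    ∀ x, Tendsto (fun n => F n x) atTop (𝓝 (A.indicator (fun _ => (1 : ℝ)) x))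

lemma IsC1b.mul {X : Type*} [NormedAddCommGroup X] [NormedSpace ℝ X] {f g : X → ℝ}
    (hf : IsC1b f) (hg : IsC1b g) : IsC1b (fun x => f x * g x) := by
  obtain ⟨hf1, ⟨A, hA⟩, ⟨A', hA'⟩⟩ := hf
  obtain ⟨hg1, ⟨B, hB⟩, ⟨B', hB'⟩⟩ := hg
  refine ⟨hf1.mul hg1, ⟨A * B, fun x => ?_⟩, ⟨A * B' + B * A', fun x => ?_⟩⟩
  · rw [abs_mul]
    exact mul_le_mul (hA x) (hB x) (abs_nonneg _) ((abs_nonneg _).trans (hA x))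
  · rw [fderiv_fun_mul (hf1.differentiable one_ne_zero x) (hg1.differentiable one_ne_zero x)]
    refine (norm_add_le _ _).trans (add_le_add ?_ ?_) <;> rw [norm_smul, Real.norm_eq_abs]
    · exact mul_le_mul (hA x) (hB' x) (norm_nonneg _) ((abs_nonneg _).trans (hA x))
    · exact mul_le_mul (hB x) (hA' x) (norm_nonneg _) ((abs_nonneg _).trans (hB x))

lemma IsC1Limit.inter {X : Type*} [NormedAddCommGroup X] [NormedSpace ℝ X] {A B : Set X}
    (hA : IsC1Limit A) (hB : IsC1Limit B) : IsC1Limit (A ∩ B) := by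
  obtain ⟨F, hF, hF1, hFl⟩ := hA
  obtain ⟨G, hG, hG1, hGl⟩ := hB
  refine ⟨fun n x => F n x * G n x, fun n => (hF n).mul (hG n), fun n x => ?_, fun x => ?_⟩
  · rw [abs_mul]
    exact mul_le_one₀ (hF1 n x) (abs_nonneg _) (hG1 n x)
  · have := (hFl x).mul (hGl x)
    rwa [← Set.inter_indicator_mul (fun _ => (1 : ℝ)) (fun _ => (1 : ℝ)), mul_one] at this

/-- A smooth cutoff of `n (r² - ‖x - c‖²)` is a test function: it vanishes outside the ball
`‖x - c‖ < r`, and inside the ball its derivative is bounded. -/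
lemma isC1b_cutoff {X : Type*} [NormedAddCommGroup X] [InnerProductSpace ℝ X]
    (c : X) (r : ℝ) (hr : 0 < r) (n : ℕ) :
    IsC1b (fun x : X => Real.smoothTransition (n * (r ^ 2 - ‖x - c‖ ^ 2))) := by
  have hq : ContDiff ℝ 1 (fun x : X => (n : ℝ) * (r ^ 2 - ‖x - c‖ ^ 2)) :=
    contDiff_const.mul (contDiff_const.sub ((contDiff_id.sub contDiff_const).norm_sq ℝ))
  have hS : ContDiff ℝ 1 Real.smoothTransition := Real.smoothTransition.contDiff
  have hf := hS.comp hq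
  refine ⟨hf, ⟨1, fun x => ?_⟩, ?_⟩
  · rw [abs_of_nonneg (Real.smoothTransition.nonneg _)]
    exact Real.smoothTransition.le_one _
  obtain ⟨M, hM⟩ := (isCompact_Icc (a := (0 : ℝ)) (b := n * r ^ 2)).exists_bound_of_continuousOn
    (hS.continuous_deriv le_rfl).continuousOn
  refine ⟨M * (n * (2 * r)), fun x => ?_⟩
  have hM0 : 0 ≤ M := (norm_nonneg _).trans (hM 0 ⟨le_rfl, by positivity⟩)
  rcases lt_or_ge ‖x - c‖ r with hx | hx
  · have hsq : ‖x - c‖ ^ 2 ≤ r ^ 2 := by gcongr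
    have hd : HasFDerivAt (fun x : X => (n : ℝ) * (r ^ 2 - ‖x - c‖ ^ 2))
        ((n : ℝ) • (-(2 • (innerSL ℝ (x - c)).comp (ContinuousLinearMap.id ℝ X)) :
          X →L[ℝ] ℝ)) x :=
      ((((hasFDerivAt_id x).sub_const c).norm_sq).const_sub (r ^ 2)).const_mul _
    have hd2 := ((hS.differentiable one_ne_zero
      ((n : ℝ) * (r ^ 2 - ‖x - c‖ ^ 2))).hasDerivAt).comp_hasFDerivAt x hd
    have hfd := hd2.fderiv
    rw [show (fun x : X => Real.smoothTransition (n * (r ^ 2 - ‖x - c‖ ^ 2))) =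
      Real.smoothTransition ∘ (fun x : X => (n : ℝ) * (r ^ 2 - ‖x - c‖ ^ 2)) from rfl, hfd,
      norm_smul, norm_smul, norm_neg]
    have h2 : ‖(2 • (innerSL ℝ (x - c)).comp (ContinuousLinearMap.id ℝ X) : X →L[ℝ] ℝ)‖
        ≤ 2 * r := by
      rw [ContinuousLinearMap.comp_id, two_nsmul, two_mul]
      refine (norm_add_le _ _).trans ?_
      rw [innerSL_apply_norm]
      linarith
    refine mul_le_mul (hM _ ⟨?_, ?_⟩) ?_ (by positivity) hM0
    · exact mul_nonneg (by positivity) (by linarith)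
    · gcongr
      linarith [sq_nonneg ‖x - c‖]
    · rw [Real.norm_natCast]
      gcongr
  · -- outside the ball the cutoff attains its minimum value `0`
    have h0 : Real.smoothTransition (n * (r ^ 2 - ‖x - c‖ ^ 2)) = 0 := by
      apply Real.smoothTransition.zero_of_nonpos
      have : r ^ 2 ≤ ‖x - c‖ ^ 2 := by gcongr
      exact mul_nonpos_of_nonneg_of_nonpos (by positivity) (by linarith)
    have hmin : IsLocalMin
        (fun x : X => Real.smoothTransition (n * (r ^ 2 - ‖x - c‖ ^ 2))) x :=
      Eventually.of_forall fun y => by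
        simp only [h0]
        exact Real.smoothTransition.nonneg _
    rw [hmin.fderiv_eq_zero, norm_zero]
    positivity

lemma isC1Limit_ball {X : Type*} [NormedAddCommGroup X] [InnerProductSpace ℝ X]
    (c : X) (r : ℝ) (hr : 0 < r) : IsC1Limit (Metric.ball c r) := by
  refine ⟨_, isC1b_cutoff c r hr, fun n x => ?_, fun x => ?_⟩
  · rw [abs_of_nonneg (Real.smoothTransition.nonneg _)]
    exact Real.smoothTransition.le_one _
  by_cases hx : x ∈ Metric.ball c r
  · rw [Set.indicator_of_mem hx]
    have hpos : 0 < r ^ 2 - ‖x - c‖ ^ 2 := by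
      have : ‖x - c‖ < r := by rwa [mem_ball_iff_norm] at hx
      have : ‖x - c‖ ^ 2 < r ^ 2 := by gcongr
      linarith
    have hlim : Tendsto (fun n : ℕ => (n : ℝ) * (r ^ 2 - ‖x - c‖ ^ 2)) atTop atTop :=
      tendsto_natCast_atTop_atTop.atTop_mul_const hpos
    refine tendsto_const_nhds.congr' ?_
    filter_upwards [hlim.eventually_ge_atTop 1] with n hn
    exact (Real.smoothTransition.one_of_one_le hn).symm
  · rw [Set.indicator_of_notMem hx]
    refine tendsto_const_nhds.congr fun n => ?_
    symm
    apply Real.smoothTransition.zero_of_nonpos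
    have : r ≤ ‖x - c‖ := by rwa [mem_ball_iff_norm, not_lt] at hx
    have : r ^ 2 ≤ ‖x - c‖ ^ 2 := by gcongr
    exact mul_nonpos_of_nonneg_of_nonpos (by positivity) (by linarith)

/-- The open `C¹`-limit sets contain the balls, hence form a topological basis. -/
lemma borel_eq_generateFrom_isC1Limit (X : Type*) [NormedAddCommGroup X] [InnerProductSpace ℝ X]
    [SecondCountableTopology X] :
    borel X = MeasurableSpace.generateFrom {A : Set X | IsOpen A ∧ IsC1Limit A} := by
  refine (TopologicalSpace.isTopologicalBasis_of_isOpen_of_nhds (fun u hu => hu.1)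
    fun a u ha hu => ?_).borel_eq_generateFrom
  obtain ⟨r, hr, hru⟩ := Metric.isOpen_iff.1 hu a ha
  exact ⟨_, ⟨Metric.isOpen_ball, isC1Limit_ball a r hr⟩, Metric.mem_ball_self hr, hru⟩

/-! ### Mixtures of Fomin differentiable measures -/

/-- Although `b` is not assumed jointly measurable, its integrals over a fixed Borel set depend
measurably on the parameter: on `C¹`-limit sets this follows from integration by parts, and
the general case is a Dynkin-class argument. -/
lemma aestronglyMeasurable_setIntegral {Ω X : Type*} [MeasurableSpace Ω]
    [NormedAddCommGroup X] [InnerProductSpace ℝ X]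
    [MeasurableSpace X] [BorelSpace X] [SecondCountableTopology X]
    (m : Measure Ω) (κ : Kernel Ω X) [IsMarkovKernel κ] (v : X) (b : Ω → X → ℝ)
    (hb : ∀ᵐ ω ∂m, IsFominDeriv (κ ω) v (b ω)) (A : Set X) (hA : MeasurableSet A) :
    AEStronglyMeasurable (fun ω => ∫ x in A, b ω x ∂(κ ω)) m := by
  have hgen := (BorelSpace.measurable_eq (α := X)).trans (borel_eq_generateFrom_isC1Limit X)
  -- testing against `1` shows that `b ω` has mean zero
  have huniv : ∀ᵐ ω ∂m, ∫ x, b ω x ∂(κ ω) = 0 := by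
    filter_upwards [hb] with ω hω
    have := hω.2 (fun _ => 1) contDiff_const ⟨1, by simp⟩ ⟨0, by simp⟩
    simpa using this
  induction A, hA using MeasurableSpace.induction_on_inter hgen with
  | h_inter => exact fun A hA B hB _ => ⟨hA.1.inter hB.1, hA.2.inter hB.2⟩
  | empty => simpa using aestronglyMeasurable_const
  | basic A hA =>
    obtain ⟨F, hF, hF1, hFl⟩ := hA.2
    have hmeas : ∀ n, AEStronglyMeasurable (fun ω => ∫ x, b ω x * F n x ∂(κ ω)) m := by
      intro n
      have hcont : Continuous (fun x => fderiv ℝ (F n) x v) :=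
        ((hF n).1.continuous_fderiv one_ne_zero).clm_apply continuous_const
      refine (hcont.stronglyMeasurable.integral_kernel (κ := κ)).neg.aestronglyMeasurable.congr ?_
      filter_upwards [hb] with ω hω
      rw [Pi.neg_apply, hω.2 _ (hF n).1 (hF n).2.1 (hF n).2.2, neg_neg]
    refine aestronglyMeasurable_of_tendsto_ae atTop hmeas ?_
    filter_upwards [hb] with ω hω
    rw [← integral_indicator hA.1.measurableSet]
    refine tendsto_integral_of_dominated_convergence (fun x => ‖b ω x‖)
      (fun n => hω.1.aestronglyMeasurable.mul (hF n).1.continuous.aestronglyMeasurable)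
      hω.1.norm (fun n => ae_of_all _ fun x => ?_) (ae_of_all _ fun x => ?_)
    · rw [norm_mul]
      exact mul_le_of_le_one_right (norm_nonneg _) (hF1 n x)
    · have := (hFl x).const_mul (b ω x)
      convert this using 2
      by_cases hx : x ∈ A <;> simp [hx]
  | compl A hA ih =>
    refine ih.neg.congr ?_
    filter_upwards [hb, huniv] with ω hω h0
    have := integral_add_compl hA hω.1
    rw [Pi.neg_apply]
    linarith
  | iUnion f hd hf ih =>
    refine aestronglyMeasurable_of_tendsto_ae (atTop : Filter (Finset ℕ))
      (f := fun s ω => ∑ i ∈ s, ∫ x in f i, b ω x ∂(κ ω))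
      (fun s => Finset.aestronglyMeasurable_fun_sum s fun i _ => ih i) ?_
    filter_upwards [hb] with ω hω
    exact hasSum_integral_iUnion hf hd hω.1.integrableOn

/-- The signed measure `A ↦ ∫ (∫_A b_ω dκ_ω) dm(ω)` is absolutely continuous with respect to the
mixture `κ ∘ₘ m`, so it has a density. -/
lemma exists_mixture_density {Ω X : Type*} [MeasurableSpace Ω]
    [NormedAddCommGroup X] [InnerProductSpace ℝ X]
    [MeasurableSpace X] [BorelSpace X] [SecondCountableTopology X]
    (m : Measure Ω) [IsFiniteMeasure m] (κ : Kernel Ω X) [IsMarkovKernel κ] (v : X)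
    (b : Ω → X → ℝ) (C : Ω → ℝ) (hC : Integrable C m)
    (hb : ∀ᵐ ω ∂m, IsFominDeriv (κ ω) v (b ω) ∧ ∫ x, |b ω x| ∂(κ ω) ≤ C ω) :
    ∃ β : X → ℝ, Measurable β ∧ Integrable β (m.bind κ) ∧ ∀ A, MeasurableSet A →
      ∫ x in A, β x ∂(m.bind κ) = ∫ ω, ∫ x in A, b ω x ∂(κ ω) ∂m := by
  classical
  have hmeas := aestronglyMeasurable_setIntegral m κ v b (hb.mono fun ω h => h.1)
  have hbound : ∀ᵐ ω ∂m, ∀ A, ‖∫ x in A, b ω x ∂(κ ω)‖ ≤ C ω := by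
    filter_upwards [hb] with ω hω A
    refine (norm_integral_le_integral_norm _).trans (le_trans ?_ hω.2)
    exact setIntegral_le_integral hω.1.1.norm (ae_of_all _ fun x => norm_nonneg _)
  let L : SignedMeasure X :=
    { measureOf' := fun A => if MeasurableSet A then ∫ ω, ∫ x in A, b ω x ∂(κ ω) ∂m else 0
      empty' := by simp
      not_measurable' := fun A hA => by simp [hA]
      m_iUnion' := by
        intro f hf hd
        simp only [hf, MeasurableSet.iUnion hf, if_true]
        have hint : ∀ i, Integrable (fun ω => ∫ x in f i, b ω x ∂(κ ω)) m := fun i =>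
          hC.mono' (hmeas _ (hf i)) (hbound.mono fun ω h => h _)
        have key : Tendsto (fun s : Finset ℕ => ∫ ω, ∑ i ∈ s, ∫ x in f i, b ω x ∂(κ ω) ∂m)
            atTop (𝓝 (∫ ω, ∫ x in ⋃ i, f i, b ω x ∂(κ ω) ∂m)) := by
          refine tendsto_integral_filter_of_dominated_convergence C
            (Eventually.of_forall fun s =>
              Finset.aestronglyMeasurable_fun_sum s fun i _ => hmeas _ (hf i))
            (Eventually.of_forall fun s => ?_) hC ?_
          · filter_upwards [hb, hbound] with ω hω hB
            rw [← integral_biUnion_finset s (fun i _ => hf i) (fun i _ j _ hij => hd hij)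
              fun i _ => hω.1.1.integrableOn]
            exact hB _
          · filter_upwards [hb] with ω hω
            exact hasSum_integral_iUnion hf hd hω.1.1.integrableOn
        refine key.congr fun s => ?_
        exact integral_finsetSum s fun i _ => hint i }
  have hL : ∀ A, MeasurableSet A → L A = ∫ ω, ∫ x in A, b ω x ∂(κ ω) ∂m := fun A hA =>
    if_pos hA
  have hac : L ≪ᵥ (m.bind κ).toENNRealVectorMeasure := by
    refine VectorMeasure.AbsolutelyContinuous.mk fun A hA h0 => ?_
    rw [Measure.toENNRealVectorMeasure_apply_measurable hA,
      Measure.bind_apply hA κ.measurable.aemeasurable,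
      lintegral_eq_zero_iff (κ.measurable_coe hA)] at h0
    rw [hL A hA]
    refine integral_eq_zero_of_ae ?_
    filter_upwards [h0] with ω hω
    exact setIntegral_measure_zero _ hω
  have hint := SignedMeasure.integrable_rnDeriv L (m.bind κ)
  refine ⟨L.rnDeriv (m.bind κ), SignedMeasure.measurable_rnDeriv _ _, hint, fun A hA => ?_⟩
  rw [← hL A hA, ← withDensityᵥ_apply hint hA, SignedMeasure.withDensityᵥ_rnDeriv_eq L _ hac]

/-- The defining identity of the mixture density extends from indicators to bounded measurable
functions. -/
lemma integral_mixture_density_mul {Ω X : Type*} [MeasurableSpace Ω]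
    [NormedAddCommGroup X] [InnerProductSpace ℝ X]
    [MeasurableSpace X] [BorelSpace X] [SecondCountableTopology X]
    (m : Measure Ω) (κ : Kernel Ω X) [IsMarkovKernel κ] (v : X)
    (b : Ω → X → ℝ) (C : Ω → ℝ) (hC : Integrable C m)
    (hb : ∀ᵐ ω ∂m, IsFominDeriv (κ ω) v (b ω) ∧ ∫ x, |b ω x| ∂(κ ω) ≤ C ω)
    (β : X → ℝ) (hβ : Integrable β (m.bind κ))
    (hβA : ∀ A, MeasurableSet A →
      ∫ x in A, β x ∂(m.bind κ) = ∫ ω, ∫ x in A, b ω x ∂(κ ω) ∂m)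
    (f : X → ℝ) (hf : Measurable f) (K : ℝ) (hK0 : 0 ≤ K) (hK : ∀ x, |f x| ≤ K) :
    ∫ x, β x * f x ∂(m.bind κ) = ∫ ω, ∫ x, b ω x * f x ∂(κ ω) ∂m := by
  have hbound : ∀ (g : X → ℝ) (K : ℝ), 0 ≤ K → (∀ x, |g x| ≤ K) →
      ∀ᵐ ω ∂m, ‖∫ x, b ω x * g x ∂(κ ω)‖ ≤ C ω * K := by
    intro g K hK0 hK
    filter_upwards [hb] with ω hω
    calc ‖∫ x, b ω x * g x ∂(κ ω)‖ ≤ ∫ x, |b ω x| * K ∂(κ ω) := by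
          refine norm_integral_le_of_norm_le (hω.1.1.abs.mul_const K) (ae_of_all _ fun x => ?_)
          rw [norm_mul]
          exact mul_le_mul_of_nonneg_left (hK x) (abs_nonneg _)
      _ ≤ C ω * K := by
          rw [integral_mul_const]
          exact mul_le_mul_of_nonneg_right hω.2 hK0
  have hprod : ∀ (μ : Measure X) (a : X → ℝ), Integrable a μ → ∀ g : SimpleFunc X ℝ,
      Integrable (fun x => a x * g x) μ := by
    intro μ a ha g
    obtain ⟨B, hB⟩ := g.exists_forall_norm_le
    exact ha.mul_bdd g.measurable.aestronglyMeasurable (ae_of_all _ hB)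
  have hsimple : ∀ g : SimpleFunc X ℝ,
      Integrable (fun ω => ∫ x, b ω x * g x ∂(κ ω)) m ∧
      ∫ x, β x * g x ∂(m.bind κ) = ∫ ω, ∫ x, b ω x * g x ∂(κ ω) ∂m := by
    intro g
    induction g using SimpleFunc.induction with
    | const c hs =>
      rename_i s
      have hrw : ∀ (μ : Measure X) (a : X → ℝ),
          ∫ x, a x * (SimpleFunc.piecewise s hs (SimpleFunc.const X c) (SimpleFunc.const X 0)) x ∂μ
            = (∫ x in s, a x ∂μ) * c := by
        intro μ a
        rw [← integral_mul_const, ← integral_indicator hs]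
        refine integral_congr_ae (ae_of_all _ fun x => ?_)
        by_cases hx : x ∈ s <;> simp [hx]
      simp only [hrw]
      refine ⟨Integrable.mul_const ?_ c, ?_⟩
      · refine hC.mono' (aestronglyMeasurable_setIntegral m κ v b (hb.mono fun ω h => h.1) s hs) ?_
        filter_upwards [hb] with ω hω
        refine (norm_integral_le_integral_norm _).trans (le_trans ?_ hω.2)
        exact setIntegral_le_integral hω.1.1.norm (ae_of_all _ fun x => norm_nonneg _)
      · rw [hβA s hs, integral_mul_const]
    | @add g₁ g₂ hd h₁ h₂ =>
      have hω : (fun ω => ∫ x, b ω x * (g₁ + g₂) x ∂(κ ω)) =ᵐ[m]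
          fun ω => (∫ x, b ω x * g₁ x ∂(κ ω)) + ∫ x, b ω x * g₂ x ∂(κ ω) := by
        filter_upwards [hb] with ω hω
        rw [← integral_add (hprod _ _ hω.1.1 g₁) (hprod _ _ hω.1.1 g₂)]
        simp only [SimpleFunc.coe_add, Pi.add_apply, mul_add]
      refine ⟨(h₁.1.add h₂.1).congr hω.symm, ?_⟩
      rw [integral_congr_ae hω, integral_add h₁.1 h₂.1, ← h₁.2, ← h₂.2,
        ← integral_add (hprod _ _ hβ g₁) (hprod _ _ hβ g₂)]
      simp only [SimpleFunc.coe_add, Pi.add_apply, mul_add]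
  have hfs : StronglyMeasurable f := hf.stronglyMeasurable
  have hlim : ∀ (μ : Measure X) (a : X → ℝ), Integrable a μ →
      Tendsto (fun n => ∫ x, a x * hfs.approxBounded K n x ∂μ) atTop
        (𝓝 (∫ x, a x * f x ∂μ)) := by
    intro μ a ha
    refine tendsto_integral_of_dominated_convergence (fun x => ‖a x‖ * K)
      (fun n => (hprod _ _ ha _).aestronglyMeasurable) (ha.norm.mul_const K)
      (fun n => ae_of_all _ fun x => ?_) (ae_of_all _ fun x => ?_)
    · rw [norm_mul]
      exact mul_le_mul_of_nonneg_left (hfs.norm_approxBounded_le hK0 n x) (norm_nonneg _)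
    · exact (hfs.tendsto_approxBounded_of_norm_le (hK x)).const_mul _
  refine tendsto_nhds_unique (hlim _ β hβ) ?_
  simp only [(hsimple _).2]
  refine tendsto_integral_of_dominated_convergence (fun ω => C ω * K)
    (fun n => (hsimple _).1.aestronglyMeasurable) (hC.mul_const K)
    (fun n => hbound _ K hK0 (hfs.norm_approxBounded_le hK0 n)) ?_
  filter_upwards [hb] with ω hω
  exact hlim _ _ hω.1.1

lemma integral_bind_kernel {Ω X : Type*} [MeasurableSpace Ω] [MeasurableSpace X]
    (m : Measure Ω) [IsFiniteMeasure m] (κ : Kernel Ω X) [IsMarkovKernel κ] (g : X → ℝ)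
    (hg : Integrable g (m.bind κ)) :
    ∫ x, g x ∂(m.bind κ) = ∫ ω, ∫ x, g x ∂(κ ω) ∂m := by
  have h : (κ ∘ₖ Kernel.const Unit m) () = m.bind κ := by
    rw [Kernel.comp_apply, Kernel.const_apply]
  have := Kernel.integral_comp (η := κ) (κ := Kernel.const Unit m) (a := ()) (f := g)
    (by rwa [h])
  rwa [h, Kernel.const_apply] at this

/-- A mixture of Fomin differentiable measures is Fomin differentiable, and the `L¹` norm of its
logarithmic derivative is at most the average of the individual norms. -/
lemma exists_isFominDeriv_mixture {Ω X : Type*} [MeasurableSpace Ω]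
    [NormedAddCommGroup X] [InnerProductSpace ℝ X]
    [MeasurableSpace X] [BorelSpace X] [SecondCountableTopology X]
    (m : Measure Ω) [IsFiniteMeasure m] (κ : Kernel Ω X) [IsMarkovKernel κ] (v : X)
    (b : Ω → X → ℝ) (C : Ω → ℝ) (hC : Integrable C m)
    (hb : ∀ᵐ ω ∂m, IsFominDeriv (κ ω) v (b ω) ∧ ∫ x, |b ω x| ∂(κ ω) ≤ C ω) :
    ∃ β : X → ℝ, IsFominDeriv (m.bind κ) v β ∧
      ∫ x, |β x| ∂(m.bind κ) ≤ ∫ ω, C ω ∂m := by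
  obtain ⟨β, hβm, hβ, hβA⟩ := exists_mixture_density m κ v b C hC hb
  have hmul := integral_mixture_density_mul m κ v b C hC hb β hβ hβA
  refine ⟨β, ⟨hβ, fun f hf hfb hfd => ?_⟩, ?_⟩
  · obtain ⟨K, hK⟩ := hfb
    obtain ⟨D, hD⟩ := hfd
    have hcont : Continuous (fun x => fderiv ℝ f x v) :=
      (hf.continuous_fderiv one_ne_zero).clm_apply continuous_const
    have hint : Integrable (fun x => fderiv ℝ f x v) (m.bind κ) :=
      Integrable.of_bound hcont.aestronglyMeasurable (D * ‖v‖) (ae_of_all _ fun x =>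
        (ContinuousLinearMap.le_opNorm _ _).trans
          (mul_le_mul_of_nonneg_right (hD x) (norm_nonneg _)))
    rw [hmul f hf.continuous.measurable K ((abs_nonneg _).trans (hK 0)) hK,
      integral_bind_kernel m κ _ hint, ← integral_neg]
    refine integral_congr_ae ?_
    filter_upwards [hb] with ω hω
    exact hω.1.2 f hf ⟨K, hK⟩ ⟨D, hD⟩
  · -- test the density against its own sign
    let g : X → ℝ := fun x => if 0 ≤ β x then 1 else -1
    have hg : Measurable g :=
      Measurable.ite (measurableSet_le measurable_const hβm) measurable_const measurable_const
    have hg1 : ∀ x, |g x| ≤ 1 := fun x => by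
      by_cases hx : 0 ≤ β x <;> simp [g, hx]
    have hgβ : ∀ x, |β x| = β x * g x := fun x => by
      by_cases hx : 0 ≤ β x
      · simp [g, hx, abs_of_nonneg hx]
      · simp [g, hx, abs_of_neg (not_le.1 hx)]
    simp only [hgβ]
    rw [hmul g hg 1 zero_le_one hg1]
    refine (Real.le_norm_self _).trans (norm_integral_le_of_norm_le hC ?_)
    filter_upwards [hb] with ω hω
    refine (norm_integral_le_of_norm_le hω.1.1.abs (ae_of_all _ fun x => ?_)).trans hω.2
    rw [norm_mul]
    exact mul_le_of_le_one_right (norm_nonneg _) (hg1 x)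

/-! ### The subordinated Gaussian measures -/

/-- The mixture measures `ν_t(B) = ∫₀^∞ N(0,σQ)(B) η^{(s)}_t(σ) dσ`
(with `γ σ = N(0,σQ)` abstracted through its Gaussian Fomin-derivative property and the
Cameron-Martin embedding `ι : H = Q^{1/2}(X) → X`) are Fomin differentiable along every
`h ∈ H`, with `‖β^{ν_t}_h‖_{L¹} ≤ C t^{-1/(2s)} ‖h‖_H`,
`C = √(2/π) ∫₀^∞ η^{(s)}(τ) τ^{-1/2} dτ`. -/
theorem statement16 {X H : Type*}
    [NormedAddCommGroup X] [InnerProductSpace ℝ X] [CompleteSpace X]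
    [MeasurableSpace X] [BorelSpace X] [SecondCountableTopology X]
    [NormedAddCommGroup H] [NormedSpace ℝ H]
    (ι : H →L[ℝ] X)
    (s : ℝ) (hs : s ∈ Set.Ioo (0 : ℝ) 1)
    (γ : ℝ → Measure X) (hγprob : ∀ σ : ℝ, 0 < σ → IsProbabilityMeasure (γ σ))
    (hγFomin : ∀ σ : ℝ, 0 < σ → ∀ h : H, ∃ b : X → ℝ,
      IsFominDeriv (γ σ) (ι h) b ∧
      ∫ x, |b x| ∂(γ σ) = Real.sqrt (2 / Real.pi) * σ ^ (-(1 : ℝ) / 2) * ‖h‖)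
    (η : ℝ → ℝ) (hnn : ∀ τ : ℝ, 0 < τ → 0 ≤ η τ)
    (hint : IntegrableOn η (Set.Ioi 0))
    (hone : ∫ τ in Set.Ioi (0 : ℝ), η τ = 1)
    (hhalf : IntegrableOn (fun τ : ℝ => η τ * τ ^ (-(1 : ℝ) / 2)) (Set.Ioi 0))
    (ν : ℝ → Measure X)
    (hν : ∀ t : ℝ, 0 < t →
      ν t = Measure.bind
        ((MeasureTheory.volume.restrict (Set.Ioi (0 : ℝ))).withDensity
          (fun σ => ENNReal.ofReal (t ^ (-(1 : ℝ) / s) * η (t ^ (-(1 : ℝ) / s) * σ)))) γ) :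
    ∀ t : ℝ, 0 < t → ∀ h : H, ∃ βt : X → ℝ,
      IsFominDeriv (ν t) (ι h) βt ∧
      ∫ x, |βt x| ∂(ν t) ≤
        (Real.sqrt (2 / Real.pi) * ∫ τ in Set.Ioi (0 : ℝ), η τ * τ ^ (-(1 : ℝ) / 2)) *
          t ^ (-(1 : ℝ) / (2 * s)) * ‖h‖ := by
  intro t ht h
  set m : Measure ℝ := (volume.restrict (Set.Ioi (0 : ℝ))).withDensity
    (fun σ => ENNReal.ofReal (t ^ (-(1 : ℝ) / s) * η (t ^ (-(1 : ℝ) / s) * σ))) with hm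
  have hνt : ν t = m.bind γ := hν t ht
  have hI0 : 0 ≤ ∫ τ in Set.Ioi (0 : ℝ), η τ * τ ^ (-(1 : ℝ) / 2) :=
    setIntegral_nonneg measurableSet_Ioi fun τ hτ =>
      mul_nonneg (hnn τ hτ) (Real.rpow_nonneg (le_of_lt hτ) _)
  -- `Measure.bind` along a function that is not a.e. measurable is the zero measure
  by_cases hγ : AEMeasurable γ m
  swap
  · have h0 : ν t = 0 := by
      rw [hνt, Measure.bind, Measure.map_of_not_aemeasurable hγ, Measure.join_zero]
    refine ⟨0, ⟨by simp [h0], fun f _ _ _ => by simp [h0]⟩, ?_⟩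
    simp only [h0, integral_zero_measure]
    positivity
  set c : ℝ := t ^ (-(1 : ℝ) / s) with hc
  have hc0 : 0 < c := Real.rpow_pos_of_pos ht _
  have hηc : IntegrableOn (fun σ => c * η (c * σ)) (Set.Ioi 0) := by
    refine Integrable.const_mul ?_ c
    refine (integrableOn_Ioi_comp_mul_left_iff η 0 hc0).2 ?_
    rwa [mul_zero]
  have hdm : AEMeasurable (fun σ => ENNReal.ofReal (c * η (c * σ)))
      (volume.restrict (Set.Ioi (0 : ℝ))) := hηc.aestronglyMeasurable.aemeasurable.ennreal_ofReal
  have hfin : IsFiniteMeasure m := isFiniteMeasure_withDensity_ofReal hηc.hasFiniteIntegral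
  have hpos : ∀ᵐ σ ∂m, 0 < σ :=
    (withDensity_absolutelyContinuous _ _).ae_le (ae_restrict_mem measurableSet_Ioi)
  obtain ⟨γ', hγ'm, hγ'r, hγγ'⟩ := hγ.exists_ae_eq_range_subset
    (t := {μ : Measure X | IsProbabilityMeasure μ})
    (hpos.mono fun σ hσ => hγprob σ hσ) ⟨Measure.dirac 0, Measure.dirac.isProbabilityMeasure⟩
  let κ : Kernel ℝ X := ⟨γ', hγ'm⟩
  have hκ : IsMarkovKernel κ := ⟨fun σ => hγ'r ⟨σ, rfl⟩⟩
  have hνκ : ν t = m.bind κ := hνt.trans (Measure.bind_congr_right hγγ')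
  have hex : ∀ σ : ℝ, ∃ b : X → ℝ, 0 < σ → IsFominDeriv (γ σ) (ι h) b ∧
      ∫ x, |b x| ∂(γ σ) = Real.sqrt (2 / Real.pi) * σ ^ (-(1 : ℝ) / 2) * ‖h‖ := by
    intro σ
    by_cases hσ : 0 < σ
    · obtain ⟨b, hb⟩ := hγFomin σ hσ h
      exact ⟨b, fun _ => hb⟩
    · exact ⟨0, fun h' => absurd h' hσ⟩
  choose b hb using hex
  have hbκ : ∀ᵐ σ ∂m, IsFominDeriv (κ σ) (ι h) (b σ) ∧
      ∫ x, |b σ x| ∂(κ σ) ≤ Real.sqrt (2 / Real.pi) * σ ^ (-(1 : ℝ) / 2) * ‖h‖ := by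
    filter_upwards [hpos, hγγ'] with σ hσ hσγ
    have hκσ : κ σ = γ σ := hσγ.symm
    rw [hκσ]
    exact ⟨(hb σ hσ).1, (hb σ hσ).2.le⟩
  -- scaling: `c η(cσ) σ^{-1/2} = c^{3/2} (η(τ) τ^{-1/2})` at `τ = c σ`
  have hscale : ∀ σ ∈ Set.Ioi (0 : ℝ),
      (ENNReal.ofReal (c * η (c * σ))).toReal • σ ^ (-(1 : ℝ) / 2) =
        (c * c ^ ((1 : ℝ) / 2)) * (η (c * σ) * (c * σ) ^ (-(1 : ℝ) / 2)) := by
    intro σ hσ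
    have hσ' : (0 : ℝ) < σ := hσ
    rw [ENNReal.toReal_ofReal (mul_nonneg hc0.le (hnn _ (mul_pos hc0 hσ'))), smul_eq_mul,
      Real.mul_rpow hc0.le hσ'.le]
    have h1 : c ^ ((1 : ℝ) / 2) * c ^ (-(1 : ℝ) / 2) = 1 := by
      rw [← Real.rpow_add hc0]
      norm_num
    linear_combination (-(c * η (c * σ) * σ ^ (-(1 : ℝ) / 2))) * h1
  have hlt : ∀ᵐ σ ∂(volume.restrict (Set.Ioi (0 : ℝ))),
      ENNReal.ofReal (c * η (c * σ)) < ⊤ := ae_of_all _ fun σ => ENNReal.ofReal_lt_top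
  have hpowint : Integrable (fun σ : ℝ => σ ^ (-(1 : ℝ) / 2)) m := by
    refine (integrable_withDensity_iff_integrable_smul₀' hdm hlt).2 ?_
    have h1 : IntegrableOn (fun σ => η (c * σ) * (c * σ) ^ (-(1 : ℝ) / 2)) (Set.Ioi 0) := by
      refine (integrableOn_Ioi_comp_mul_left_iff
        (fun τ => η τ * τ ^ (-(1 : ℝ) / 2)) 0 hc0).2 ?_
      rwa [mul_zero]
    refine (h1.const_mul (c * c ^ ((1 : ℝ) / 2))).congr ?_
    filter_upwards [ae_restrict_mem measurableSet_Ioi] with σ hσ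
    exact (hscale σ hσ).symm
  have hpow : ∫ σ, σ ^ (-(1 : ℝ) / 2) ∂m =
      t ^ (-(1 : ℝ) / (2 * s)) * ∫ τ in Set.Ioi (0 : ℝ), η τ * τ ^ (-(1 : ℝ) / 2) := by
    have hct : c ^ ((1 : ℝ) / 2) = t ^ (-(1 : ℝ) / (2 * s)) := by
      rw [hc, ← Real.rpow_mul ht.le]
      congr 1
      have := hs.1.ne'
      field_simp
    rw [hm, integral_withDensity_eq_integral_toReal_smul₀ hdm hlt,
      setIntegral_congr_fun measurableSet_Ioi hscale, integral_const_mul,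
      integral_comp_mul_left_Ioi (fun τ => η τ * τ ^ (-(1 : ℝ) / 2)) 0 hc0, mul_zero,
      smul_eq_mul, hct]
    field_simp
  obtain ⟨β, hβ, hβb⟩ := exists_isFominDeriv_mixture m κ (ι h) b
    (fun σ => Real.sqrt (2 / Real.pi) * σ ^ (-(1 : ℝ) / 2) * ‖h‖)
    ((hpowint.const_mul _).mul_const _) hbκ
  rw [hνκ]
  refine ⟨β, hβ, hβb.trans_eq ?_⟩
  rw [integral_mul_const, integral_const_mul, hpow]
  ring
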